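/- Over an algebraically closed field k, every commutative affine algebraic group L admits a closed embedding into the Weil restriction 𝕃_S = Res_{S/k} 𝔾_m of the multiplicative group along some finite k-algebra S. -/

import Mathlib

/-!
A cocommutative coalgebra `C` of finite dimension has a commutative convolution dual
`S = Hom(C, k)`, and `S ⊗ R` is the convolution algebra `Hom(C, R)` for every commutative
`k`-algebra `R` (`dualTensor_bijective`).  Take `C` to be a finite-dimensional subcoalgebra of
`A = O(L)` that contains algebra generators of `A`.  A point `x : A → R` restricts to a linear map
`C → R`, which is a convolution unit with inverse the restriction of `x ∘ antipode` (`pointUnit`);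
restriction is multiplicative because the group law of `L(R)` is convolution, and it is injective
because `C` generates `A`.  So `x ↦ x|_C` embeds `L(R)` into `(S ⊗ R)ˣ`, naturally in `R`.

The subcoalgebra (`exists_subcoalgebra`) is the span `V` of all slices `(id ⊗ f) (Δ a)` with `a` in
a finite generating set and `f` in the linear dual of `A`.  It has finite dimension because each
`Δ a` is a finite sum of pure tensors, and it is stable under slicing by coassociativity.  Stability
says `Δ V ⊆ V ⊗ A`; by cocommutativity also `Δ V ⊆ A ⊗ V`, hence `Δ V ⊆ V ⊗ V`.
-/

open TensorProduct

namespace UnitGroupEmbedding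

open Coalgebra WithConv

/-! ### Finite-dimensional subcoalgebras -/

section Subcoalgebra

variable {k A C : Type*} [Field k] [AddCommGroup A] [Module k A] [Coalgebra k A]
  [AddCommGroup C] [Module k C]

/-- The coalgebra structure on a subspace `i : C → A` (with a linear retraction `p`) whose
comultiplication lands in `C ⊗ C`.  The latter condition is expressed as invariance of `Δ ∘ i`
under the projection `(i ∘ p) ⊗ (i ∘ p)`, and the resulting comultiplication is
`(p ⊗ p) ∘ Δ ∘ i`. -/
abbrev coalgebraOfRetract (i : C →ₗ[k] A) (p : A →ₗ[k] C) (hpi : p ∘ₗ i = .id)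
    (h : TensorProduct.map (i ∘ₗ p) (i ∘ₗ p) ∘ₗ comul ∘ₗ i = comul ∘ₗ i) : Coalgebra k C :=
  have key : TensorProduct.map i i ∘ₗ (TensorProduct.map p p ∘ₗ comul ∘ₗ i) = comul ∘ₗ i := by
    rw [← LinearMap.comp_assoc, ← TensorProduct.map_comp, h]
  have key' (x : C) : TensorProduct.map i i (TensorProduct.map p p (comul (i x))) = comul (i x) :=
    LinearMap.congr_fun key x
  have hp (x : C) : p (i x) = x := LinearMap.congr_fun hpi x
  { comul := TensorProduct.map p p ∘ₗ comul ∘ₗ i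
    counit := counit ∘ₗ i
    coassoc := by
      have hinj : Function.Injective (TensorProduct.map i (TensorProduct.map i i)) := by
        apply Function.LeftInverse.injective (g := TensorProduct.map p (TensorProduct.map p p))
        intro x
        rw [← LinearMap.comp_apply, ← TensorProduct.map_comp, ← TensorProduct.map_comp, hpi,
          TensorProduct.map_id, TensorProduct.map_id, LinearMap.id_apply]
      apply LinearMap.ext
      intro x
      apply hinj
      have e1 : TensorProduct.map i (TensorProduct.map i i) ∘ₗ
          (TensorProduct.assoc k C C C).toLinearMap ∘ₗ
          (TensorProduct.map p p ∘ₗ comul ∘ₗ i).rTensor C =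
          (TensorProduct.assoc k A A A).toLinearMap ∘ₗ comul.rTensor A ∘ₗ
            TensorProduct.map i i := by
        apply TensorProduct.ext'
        intro a b
        have : ∀ t : C ⊗[k] C, TensorProduct.map i (TensorProduct.map i i)
            (TensorProduct.assoc k C C C (t ⊗ₜ b)) =
            TensorProduct.assoc k A A A ((TensorProduct.map i i t) ⊗ₜ i b) := by
          intro t
          induction t with
          | zero => simp
          | tmul => simp
          | add u v hu hv => simp only [TensorProduct.add_tmul, map_add, hu, hv]
        simp [this, key']
      have e2 : TensorProduct.map i (TensorProduct.map i i) ∘ₗ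
          (TensorProduct.map p p ∘ₗ comul ∘ₗ i).lTensor C =
          comul.lTensor A ∘ₗ TensorProduct.map i i := by
        apply TensorProduct.ext'
        intro a b
        simp [key']
      have e1' := LinearMap.congr_fun e1 (TensorProduct.map p p (comul (i x)))
      have e2' := LinearMap.congr_fun e2 (TensorProduct.map p p (comul (i x)))
      simp only [LinearMap.comp_apply, key', LinearEquiv.coe_coe, coassoc_apply] at e1' e2' ⊢
      rw [e1', e2']
    rTensor_counit_comp_comul := by
      apply LinearMap.ext
      intro x
      have e : (counit ∘ₗ i).rTensor C ∘ₗ TensorProduct.map p p ∘ₗ TensorProduct.map i i =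
          p.lTensor k ∘ₗ (counit (R := k)).rTensor A ∘ₗ TensorProduct.map i i :=
        TensorProduct.ext' fun a b ↦ by simp [hp]
      have e' := LinearMap.congr_fun e (TensorProduct.map p p (comul (i x)))
      simp only [LinearMap.comp_apply, key', rTensor_counit_comul] at e' ⊢
      rw [e']
      simp [hp]
    lTensor_counit_comp_comul := by
      apply LinearMap.ext
      intro x
      have e : (counit ∘ₗ i).lTensor C ∘ₗ TensorProduct.map p p ∘ₗ TensorProduct.map i i =
          p.rTensor k ∘ₗ (counit (R := k)).lTensor A ∘ₗ TensorProduct.map i i :=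
        TensorProduct.ext' fun a b ↦ by simp [hp]
      have e' := LinearMap.congr_fun e (TensorProduct.map p p (comul (i x)))
      simp only [LinearMap.comp_apply, key', lTensor_counit_comul] at e' ⊢
      rw [e']
      simp [hp] }

/-- The slice `(id ⊗ f) (Δ a)` of the comultiplication of `a`, as a linear function of `f`. -/
noncomputable def slice (a : A) : Module.Dual k A →ₗ[k] A where
  toFun f := TensorProduct.rid k A (f.lTensor A (comul a))
  map_add' f g := by simp [LinearMap.lTensor_add]
  map_smul' c f := by simp [LinearMap.lTensor_smul]

lemma slice_apply (a : A) (f : Module.Dual k A) :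
    slice a f = TensorProduct.rid k A (f.lTensor A (comul a)) := rfl

lemma slice_counit (a : A) : slice a (counit (R := k)) = a := by
  simp [slice_apply]

/-- Iterated slices of `a` are slices of `a`, by the convolution product of the functionals. -/
lemma slice_slice (a : A) (f g : Module.Dual k A) :
    slice (slice a f) g =
      slice a (LinearMap.mul' k k ∘ₗ TensorProduct.map g f ∘ₗ comul) := by
  have e1 : ∀ t : A ⊗[k] A, TensorProduct.rid k A (g.lTensor A (comul
      (TensorProduct.rid k A (f.lTensor A t)))) = TensorProduct.rid k A
      ((LinearMap.mul' k k ∘ₗ TensorProduct.map g f).lTensor A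
        (TensorProduct.assoc k A A A (comul.rTensor A t))) := by
    intro t
    induction t with
    | zero => simp
    | add u v hu hv => simp only [map_add, hu, hv]
    | tmul a b =>
      simp only [LinearMap.lTensor_tmul, LinearMap.rTensor_tmul, TensorProduct.rid_tmul, map_smul]
      induction (comul a : A ⊗[k] A) with
      | zero => simp
      | add u v hu hv => simp only [TensorProduct.add_tmul, map_add, smul_add, hu, hv]
      | tmul c d => simp [smul_smul, mul_comm]
  rw [slice_apply, slice_apply, e1, coassoc_apply, slice_apply, ← LinearMap.lTensor_comp_apply,
    LinearMap.comp_assoc]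

lemma finite_range_slice (a : A) : (slice (k := k) a).range.FG := by
  let r := Coalgebra.Repr.arbitrary k a
  have : (slice (k := k) a).range ≤ Submodule.span k (r.left '' r.index) := by
    rintro _ ⟨f, rfl⟩
    rw [slice_apply, ← r.eq]
    simp only [map_sum, LinearMap.lTensor_tmul, TensorProduct.rid_tmul]
    exact Submodule.sum_mem _ fun i hi ↦ Submodule.smul_mem _ _
      (Submodule.subset_span ⟨i, hi, rfl⟩)
  exact (Submodule.fg_span (r.index.finite_toSet.image r.left)).of_le this

/-- A finite set lies in a finite-dimensional subspace stable under all slices. -/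
lemma exists_slice_stable (s : Finset A) : ∃ V : Submodule k A, V.FG ∧ (s : Set A) ⊆ V ∧
    ∀ v ∈ V, ∀ f : Module.Dual k A, slice v f ∈ V := by
  refine ⟨⨆ a ∈ s, (slice (k := k) a).range, ?_, ?_, ?_⟩
  · exact Submodule.fg_biSup s _ fun a _ ↦ finite_range_slice a
  · intro a ha
    exact Submodule.mem_iSup_of_mem a (Submodule.mem_iSup_of_mem ha ⟨counit, slice_counit a⟩)
  · intro v hv f
    have hle : (⨆ a ∈ s, (slice (k := k) a).range) ≤ (⨆ a ∈ s, (slice (k := k) a).range).comap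
        ((TensorProduct.rid k A).toLinearMap ∘ₗ f.lTensor A ∘ₗ comul) := by
      refine iSup₂_le fun a ha ↦ ?_
      rintro _ ⟨g, rfl⟩
      refine Submodule.mem_iSup_of_mem a (Submodule.mem_iSup_of_mem ha ?_)
      exact ⟨_, (slice_slice a g f).symm⟩
    exact hle hv

/-- For a slice-stable `V` one has `Δ V ⊆ V ⊗ A`, stated with a projection `π` onto `V`. -/
lemma rTensor_comul_eq (V : Submodule k A) (hV : ∀ v ∈ V, ∀ f : Module.Dual k A, slice v f ∈ V)
    (π : A →ₗ[k] A) (hπ : ∀ v ∈ V, π v = v) {v : A} (hv : v ∈ V) :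
    π.rTensor A (comul v) = comul (R := k) v := by
  classical
  -- The slices along the coordinate functionals of a basis detect equality in `A ⊗ A`.
  let b := Module.Basis.ofVectorSpace k A
  apply (TensorProduct.equivFinsuppOfBasisRight (M := A) b).injective
  ext i
  have e : ∀ t : A ⊗[k] A, TensorProduct.rid k A ((b.coord i).lTensor A (π.rTensor A t)) =
      π (TensorProduct.rid k A ((b.coord i).lTensor A t)) := by
    intro t
    induction t with
    | zero => simp
    | add u v hu hv => simp only [map_add, hu, hv]
    | tmul => simp
  rw [TensorProduct.equivFinsuppOfBasisRight_apply, TensorProduct.equivFinsuppOfBasisRight_apply, e]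
  exact hπ _ (hV v hv (b.coord i))

/-- For a slice-stable `V` one has `Δ V ⊆ V ⊗ V`, stated with a projection `π` onto `V`. -/
lemma map_comul_eq [IsCocomm k A] (V : Submodule k A)
    (hV : ∀ v ∈ V, ∀ f : Module.Dual k A, slice v f ∈ V)
    (π : A →ₗ[k] A) (hπ : ∀ v ∈ V, π v = v) {v : A} (hv : v ∈ V) :
    TensorProduct.map π π (comul v) = comul (R := k) v := by
  have h1 := rTensor_comul_eq V hV π hπ hv
  have h2 : π.lTensor A (comul v) = comul (R := k) v := by
    have := congrArg (TensorProduct.comm k A A) h1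
    rwa [comm_comul, LinearMap.rTensor, ← TensorProduct.map_comm, comm_comul] at this
  rw [← LinearMap.rTensor_comp_lTensor, LinearMap.comp_apply, h2, h1]

/-- A finite subset of a cocommutative coalgebra lies in a finite-dimensional subcoalgebra. -/
lemma exists_subcoalgebra [IsCocomm k A] (s : Finset A) :
    ∃ (V : Submodule k A) (_ : Coalgebra k V), IsCocomm k V ∧ Module.Finite k V ∧
      ∃ i : V →ₗc[k] A, (s : Set A) ⊆ Set.range i := by
  obtain ⟨V, hfg, hs, hV⟩ := exists_slice_stable (k := k) s
  obtain ⟨p, hp⟩ := V.subtype.exists_leftInverse_of_injective V.ker_subtype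
  have hmap : TensorProduct.map (V.subtype ∘ₗ p) (V.subtype ∘ₗ p) ∘ₗ comul ∘ₗ V.subtype =
      comul ∘ₗ V.subtype := by
    ext v
    refine map_comul_eq V hV _ (fun w hw ↦ ?_) v.2
    exact congrArg Subtype.val (LinearMap.congr_fun hp ⟨w, hw⟩)
  let inst : Coalgebra k V := coalgebraOfRetract V.subtype p hp hmap
  refine ⟨V, inst, ⟨?_⟩, Module.Finite.iff_fg.mpr hfg,
    { V.subtype with
      counit_comp := rfl
      map_comp_comul := ?_ }, ?_⟩
  · ext v
    change TensorProduct.comm k V V (TensorProduct.map p p (comul (v : A))) =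
      TensorProduct.map p p (comul (v : A))
    rw [← TensorProduct.map_comm, comm_comul]
  · rw [← hmap, TensorProduct.map_comp, LinearMap.comp_assoc]
    rfl
  · intro a ha
    exact ⟨⟨a, hs ha⟩, rfl⟩

end Subcoalgebra

/-! ### Scalar extension of the convolution dual -/

section ConvolutionDual

variable {k C R : Type*} [Field k] [AddCommGroup C] [Module k C] [Coalgebra k C] [IsCocomm k C]
  [CommRing R] [Algebra k R]

/-- Postcomposition with an algebra map, as a map of convolution algebras. -/
noncomputable def convComp {R' : Type*} [CommRing R'] [Algebra k R'] (f : R →ₐ[k] R') :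
    WithConv (C →ₗ[k] R) →ₐ[k] WithConv (C →ₗ[k] R') :=
  .ofLinearMap
    { toFun φ := toConv (f.toLinearMap ∘ₗ φ.ofConv)
      map_add' φ ψ := by ext; simp
      map_smul' c φ := by ext; simp }
    (by ext; simp)
    (fun φ ψ ↦ WithConv.ofConv_injective (LinearMap.algHom_comp_convMul_distrib f φ ψ))

variable (k C R) in
/-- The structure map of the convolution `R`-algebra, seen as a map of `k`-algebras. -/
noncomputable def convScalar : R →ₐ[k] WithConv (C →ₗ[k] R) :=
  { algebraMap R (WithConv (C →ₗ[k] R)) with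
    commutes' := fun r ↦ by ext c; simp [Algebra.smul_def] }

variable (k C R) in
/-- The canonical map `Hom(C, k) ⊗ R → Hom(C, R)`, `φ ⊗ r ↦ (c ↦ φ c • r)`, of convolution
algebras. -/
noncomputable def dualTensor : WithConv (C →ₗ[k] k) ⊗[k] R →ₐ[k] WithConv (C →ₗ[k] R) :=
  Algebra.TensorProduct.lift (convComp (Algebra.ofId k R)) (convScalar k C R) (fun _ _ ↦ .all _ _)

lemma dualTensor_tmul_apply (φ : WithConv (C →ₗ[k] k)) (r : R) (c : C) :
    dualTensor k C R (φ ⊗ₜ r) c = φ c • r := by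
  have h : convScalar k C R r = r • (1 : WithConv (C →ₗ[k] R)) :=
    Algebra.algebraMap_eq_smul_one r
  rw [dualTensor, Algebra.TensorProduct.lift_tmul, h, mul_smul_comm, mul_one]
  change r * algebraMap k R (φ c) = φ c • r
  rw [Algebra.smul_def, mul_comm]

lemma dualTensor_bijective [Module.Finite k C] : Function.Bijective (dualTensor k C R) := by
  let b := Module.finBasis k C
  -- The inverse is `g ↦ ∑ bᵢ* ⊗ g bᵢ`, for a basis `b` with dual basis `b*`.
  let E : WithConv (C →ₗ[k] R) → WithConv (C →ₗ[k] k) ⊗[k] R :=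
    fun g ↦ ∑ i, toConv (b.coord i) ⊗ₜ g (b i)
  refine Function.bijective_iff_has_inverse.mpr ⟨E, fun t ↦ ?_, fun g ↦ ?_⟩
  · induction t with
    | zero => simp [E]
    | add u v hu hv =>
      conv_rhs => rw [← hu, ← hv]
      simp [E, TensorProduct.tmul_add, Finset.sum_add_distrib]
    | tmul φ r =>
      simp only [E, dualTensor_tmul_apply, TensorProduct.tmul_smul, TensorProduct.smul_tmul',
        ← TensorProduct.sum_tmul]
      congr 1
      ext c
      conv_rhs => rw [← b.sum_repr c]
      simp
  · ext c
    have : g c = ∑ i, b.repr c i • g (b i) := by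
      conv_lhs => rw [← b.sum_repr c]
      simp only [map_sum, map_smul]
    have h2 : ∀ (s : Finset (Fin (Module.finrank k C)))
        (F : Fin (Module.finrank k C) → WithConv (C →ₗ[k] R)),
        (∑ i ∈ s, F i) c = ∑ i ∈ s, F i c := by
      intro s F
      simp
    rw [this, map_sum, h2]
    simp only [dualTensor_tmul_apply]
    rfl

variable (k C R) in
/-- The isomorphism `Hom(C, k) ⊗ R ≃ Hom(C, R)` for a finite-dimensional `C`. -/
noncomputable def dualTensorEquiv [Module.Finite k C] :
    WithConv (C →ₗ[k] k) ⊗[k] R ≃ₐ[k] WithConv (C →ₗ[k] R) :=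
  AlgEquiv.ofBijective (dualTensor k C R) dualTensor_bijective

/-- The isomorphism `Hom(C, k) ⊗ R ≃ Hom(C, R)` is natural in `R`. -/
lemma dualTensor_map {R' : Type*} [CommRing R'] [Algebra k R'] (f : R →ₐ[k] R')
    (t : WithConv (C →ₗ[k] k) ⊗[k] R) :
    dualTensor k C R' (Algebra.TensorProduct.map (AlgHom.id k _) f t) =
      convComp f (dualTensor k C R t) := by
  induction t with
  | zero => simp
  | add u v hu hv => simp only [map_add, hu, hv]
  | tmul φ r =>
    ext c
    change _ = f (dualTensor k C R (φ ⊗ₜ r) c)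
    rw [Algebra.TensorProduct.map_tmul, dualTensor_tmul_apply, dualTensor_tmul_apply, map_smul]
    rfl

end ConvolutionDual

/-! ### Points as convolution units -/

section Points

variable {k A C R : Type*} [Field k] [CommRing A] [HopfAlgebra k A]
  [AddCommGroup C] [Module k C] [Coalgebra k C] [CommRing R] [Algebra k R]

/-- Pushing a convolution identity `g * h = 1` on `A` forward along a point and restricting it
to `C`. -/
lemma restrict_mul_eq_one (i : C →ₗc[k] A) (x : A →ₐ[k] R) {g h : A →ₗ[k] A}
    (hgh : toConv g * toConv h = 1) :
    (toConv (x.toLinearMap ∘ₗ g ∘ₗ i.toLinearMap) : WithConv (C →ₗ[k] R)) *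
      toConv (x.toLinearMap ∘ₗ h ∘ₗ i.toLinearMap) = 1 := by
  have h1 := LinearMap.convMul_comp_coalgHom_distrib (toConv g) (toConv h) i
  have h2 := LinearMap.algHom_comp_convMul_distrib x
    (toConv (g ∘ₗ i.toLinearMap)) (toConv (h ∘ₗ i.toLinearMap))
  apply WithConv.ofConv_injective
  refine h2.symm.trans ?_
  refine (congrArg (x.toLinearMap ∘ₗ ·) h1).symm.trans ?_
  rw [hgh]
  ext c
  simp

/-- The restriction of an `R`-point `x` of the group to the coalgebra `C`, as a convolution unit;
its inverse is the restriction of the inverse point `x ∘ antipode`. -/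
noncomputable def pointUnit (i : C →ₗc[k] A) (x : A →ₐ[k] R) : (WithConv (C →ₗ[k] R))ˣ where
  val := toConv (x.toLinearMap ∘ₗ i.toLinearMap)
  inv := toConv (x.toLinearMap ∘ₗ HopfAlgebra.antipode k ∘ₗ i.toLinearMap)
  val_inv := by
    have := restrict_mul_eq_one i x LinearMap.id_mul_antipode
    rwa [LinearMap.id_comp] at this
  inv_val := by
    have := restrict_mul_eq_one i x LinearMap.antipode_mul_id
    rwa [LinearMap.id_comp] at this

variable [IsCocomm k C] [Module.Finite k C]

/-- The convolution unit `x|_C` transported to `(S ⊗ R)ˣ`, where `S = Hom(C, k)`. -/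
noncomputable def embed (i : C →ₗc[k] A) (x : A →ₐ[k] R) : (WithConv (C →ₗ[k] k) ⊗[k] R)ˣ :=
  Units.mapEquiv (dualTensorEquiv k C R).symm.toMulEquiv (pointUnit i x)

lemma dualTensor_embed (i : C →ₗc[k] A) (x : A →ₐ[k] R) :
    dualTensor k C R (embed i x) = toConv (x.toLinearMap ∘ₗ i.toLinearMap) :=
  (dualTensorEquiv k C R).apply_symm_apply (pointUnit i x : WithConv (C →ₗ[k] R))

end Points

end UnitGroupEmbedding

/-- Over an algebraically closed field `k`, every commutative affine algebraic group `L`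
admits a closed embedding into `𝕃_S = Res_{S/k} 𝔾_m` for some finite `k`-algebra `S`.

Here `L` is encoded by its (finitely generated, commutative, cocommutative) Hopf algebra
`A = O(L)`; its group of `R`-points is `(A →ₐ[k] R)` with multiplication given by
convolution `x * y = mul_R ∘ (x ⊗ y) ∘ comul`, and `𝕃_S(R) = (S ⊗_k R)ˣ`.  The statement
asserts the existence of a finite `k`-algebra `S` together with a natural, injective and
multiplicative transformation `ι_R : L(R) → (S ⊗_k R)ˣ`, i.e. a monomorphism of algebraic
groups `L ↪ 𝕃_S`. -/
theorem embeds_into_unitGroup_of_finite_algebra (k : Type) [Field k] [IsAlgClosed k]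
    (A : Type) [CommRing A] [HopfAlgebra k A]
    (hcc : (TensorProduct.comm k A A).toLinearMap ∘ₗ Coalgebra.comul =
      (Coalgebra.comul : A →ₗ[k] A ⊗[k] A))
    (hA : Algebra.FiniteType k A) :
    ∃ (S : Type) (_ : CommRing S) (_ : Algebra k S) (_ : Module.Finite k S)
      (ι : ∀ (R : Type) [CommRing R] [Algebra k R], (A →ₐ[k] R) → (S ⊗[k] R)ˣ),
      (∀ (R : Type) [CommRing R] [Algebra k R], Function.Injective (ι R)) ∧
      (∀ (R : Type) [CommRing R] [Algebra k R] (x y z : A →ₐ[k] R),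
        (∀ a : A, z a = LinearMap.mul' k R
          (TensorProduct.map x.toLinearMap y.toLinearMap (Coalgebra.comul a))) →
        ι R z = ι R x * ι R y) ∧
      (∀ (R R' : Type) [CommRing R] [Algebra k R] [CommRing R'] [Algebra k R']
        (f : R →ₐ[k] R') (x : A →ₐ[k] R),
        ι R' (f.comp x) =
          Units.map (Algebra.TensorProduct.map (AlgHom.id k S) f).toRingHom.toMonoidHom
            (ι R x)) := by
  open UnitGroupEmbedding in
  obtain ⟨s, hs⟩ := hA.out
  have : Coalgebra.IsCocomm k A := ⟨hcc⟩
  obtain ⟨V, _, _, _, i, hi⟩ := exists_subcoalgebra (k := k) s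
  refine ⟨WithConv (V →ₗ[k] k), inferInstance, inferInstance,
    Module.Finite.equiv (WithConv.linearEquiv k (V →ₗ[k] k)).symm,
    fun R _ _ x ↦ embed i x,
    fun R _ _ x y hxy ↦ ?_, fun R _ _ x y z hz ↦ ?_, fun R R' _ _ _ _ f x ↦ ?_⟩
  · have h := congrArg (fun u : (WithConv (V →ₗ[k] k) ⊗[k] R)ˣ ↦ dualTensor k V R u) hxy
    simp only [dualTensor_embed] at h
    refine AlgHom.ext_of_adjoin_eq_top hs fun a ha ↦ ?_
    obtain ⟨v, rfl⟩ := hi ha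
    exact LinearMap.congr_fun (WithConv.toConv_injective h) v
  · apply Units.ext
    apply dualTensor_bijective.1
    rw [Units.val_mul, map_mul, dualTensor_embed, dualTensor_embed, dualTensor_embed]
    have h := LinearMap.convMul_comp_coalgHom_distrib
      (WithConv.toConv x.toLinearMap) (WithConv.toConv y.toLinearMap) i
    apply WithConv.ofConv_injective
    refine Eq.trans ?_ h
    ext v
    exact hz (i v)
  · apply Units.ext
    apply dualTensor_bijective.1
    rw [dualTensor_embed]
    refine Eq.trans ?_ (dualTensor_map f _).symm
    rw [dualTensor_embed]
    rfl
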